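/- Corollary to Theorem 6.1: with the notation of the context, define the real quantities H = (1/2)·𝒳_e/𝒴_e − 1/𝒴_e, A_u = (1/2)·(𝒳_u − 𝒴_u·𝒳_e/𝒴_e) + 𝒴_u/𝒴_e for hermitian u, L² = (1/2)·Σ_{α,β} 𝓛_{e_α,e_β}², and A² = −1 + Σ_α A_{e_α}². Then −2·H·(L² − (n²(n−1)/4)·μ²) = (n/2)²·(n − 1 − A²). -/

import Mathlib

open Matrix
open scoped ComplexOrder

/-- The Jordan product of two complex matrices. -/
noncomputable def jordanProd {n : ℕ} (a b : Matrix (Fin n) (Fin n) ℂ) :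
    Matrix (Fin n) (Fin n) ℂ :=
  (1 / 2 : ℂ) • (a * b + b * a)

/-- The Jordan triple product `{uvw} = u∘(v∘w) − v∘(u∘w) + (u∘v)∘w`. -/
noncomputable def jTriple {n : ℕ} (u v w : Matrix (Fin n) (Fin n) ℂ) :
    Matrix (Fin n) (Fin n) ℂ :=
  jordanProd u (jordanProd v w) - jordanProd v (jordanProd u w)
    + jordanProd (jordanProd u v) w

/-- The real inner product `⟨u|v⟩ = (1/n)·Re(tr(u·v))`. -/
noncomputable def jInner {n : ℕ} (u v : Matrix (Fin n) (Fin n) ℂ) : ℝ :=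
  (1 / n : ℝ) * ((u * v).trace).re

/-- `𝒴_u = ⟨u|x⟩`. -/
noncomputable def Yfun {n : ℕ} (x u : Matrix (Fin n) (Fin n) ℂ) : ℝ :=
  jInner u x

/-- `𝓛_u = ⟨u∘x|π⟩`. -/
noncomputable def Lfun {n : ℕ} (x p u : Matrix (Fin n) (Fin n) ℂ) : ℝ :=
  jInner (jordanProd u x) p

/-- `𝓛_{u,v} = ⟨u∘(v∘x) − v∘(u∘x)|π⟩ − μ·i·tr(x·[u,v])/(2·tr x)`. -/
noncomputable def LLfun {n : ℕ} (μ : ℝ) (x p u v : Matrix (Fin n) (Fin n) ℂ) : ℝ :=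
  jInner (jordanProd u (jordanProd v x) - jordanProd v (jordanProd u x)) p
    - μ * (Complex.I * (x * (u * v - v * u)).trace).re / (2 * (x.trace).re)

/-- `𝒳_u = ⟨x|{πuπ}⟩ + n·μ²·Re(tr(x·u))/(tr x)² − μ·i·tr(x·[u,π])/(tr x)`. -/
noncomputable def Xfun {n : ℕ} (μ : ℝ) (x p u : Matrix (Fin n) (Fin n) ℂ) : ℝ :=
  jInner x (jTriple p u p) + (n : ℝ) * μ ^ 2 * ((x * u).trace).re / ((x.trace).re) ^ 2
    - μ * (Complex.I * (x * (u * p - p * u)).trace).re / (x.trace).re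

/-- The Hamiltonian `H = (1/2)·𝒳_e/𝒴_e − 1/𝒴_e`. -/
noncomputable def Hfun {n : ℕ} (μ : ℝ) (x p : Matrix (Fin n) (Fin n) ℂ) : ℝ :=
  (1 / 2 : ℝ) * Xfun μ x p 1 / Yfun x 1 - 1 / Yfun x 1

/-- The Laplace–Runge–Lenz component `A_u = (1/2)·(𝒳_u − 𝒴_u·𝒳_e/𝒴_e) + 𝒴_u/𝒴_e`. -/
noncomputable def Afun {n : ℕ} (μ : ℝ) (x p u : Matrix (Fin n) (Fin n) ℂ) : ℝ :=
  (1 / 2 : ℝ) * (Xfun μ x p u - Yfun x u * Xfun μ x p 1 / Yfun x 1) + Yfun x u / Yfun x 1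


lemma aux_re_trace {n : ℕ} {a b : Matrix (Fin n) (Fin n) ℂ} (ha : a.IsHermitian)
    (hb : b.IsHermitian) : (((a * b).trace.re : ℝ) : ℂ) = (a * b).trace := by
  apply Complex.conj_eq_iff_re.mp
  have : star (a * b).trace = (a * b).trace := by
    rw [← Matrix.trace_conjTranspose, Matrix.conjTranspose_mul, ha.eq, hb.eq, Matrix.trace_mul_comm]
  exact this

lemma aux_jordan_herm {n : ℕ} {a b : Matrix (Fin n) (Fin n) ℂ} (ha : a.IsHermitian)
    (hb : b.IsHermitian) : (jordanProd a b).IsHermitian := by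
  unfold jordanProd Matrix.IsHermitian
  rw [Matrix.conjTranspose_smul, Matrix.conjTranspose_add, Matrix.conjTranspose_mul,
    Matrix.conjTranspose_mul, ha.eq, hb.eq, add_comm]
  congr 1
  simp

lemma aux_comm_herm {n : ℕ} {a b : Matrix (Fin n) (Fin n) ℂ} (ha : a.IsHermitian)
    (hb : b.IsHermitian) : (Complex.I • (a * b - b * a)).IsHermitian := by
  unfold Matrix.IsHermitian
  rw [Matrix.conjTranspose_smul, Matrix.conjTranspose_sub, Matrix.conjTranspose_mul,
    Matrix.conjTranspose_mul, ha.eq, hb.eq]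
  simp
  module

lemma aux_I_trace {n : ℕ} {x a b : Matrix (Fin n) (Fin n) ℂ} (hx : x.IsHermitian)
    (ha : a.IsHermitian) (hb : b.IsHermitian) :
    (((Complex.I * (x * (a * b - b * a)).trace).re : ℝ) : ℂ)
      = Complex.I * (x * (a * b - b * a)).trace := by
  have h := aux_re_trace hx (aux_comm_herm ha hb)
  rwa [Matrix.mul_smul, Matrix.trace_smul, smul_eq_mul] at h

lemma aux_jordan_diff {n : ℕ} (u v x : Matrix (Fin n) (Fin n) ℂ) :
    jordanProd u (jordanProd v x) - jordanProd v (jordanProd u x)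
      = (1 / 4 : ℂ) • ((u * v - v * u) * x - x * (u * v - v * u)) := by
  unfold jordanProd
  simp only [Matrix.mul_smul, Matrix.smul_mul, mul_add, add_mul, mul_sub, sub_mul, mul_assoc]
  module

lemma aux_triple {n : ℕ} (p u : Matrix (Fin n) (Fin n) ℂ) :
    jTriple p u p = p * u * p := by
  unfold jTriple jordanProd
  simp only [Matrix.mul_smul, Matrix.smul_mul, mul_add, add_mul, mul_sub, sub_mul, mul_assoc]
  module

/-- A rank one matrix satisfies `x a x = tr(x a) x`. -/
lemma aux_rank_one {n : ℕ} {x : Matrix (Fin n) (Fin n) ℂ} (hrank : x.rank = 1)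
    (a : Matrix (Fin n) (Fin n) ℂ) : x * a * x = (x * a).trace • x := by
  obtain ⟨v, hv⟩ : ∃ v : Fin n → ℂ, ∀ y, ∃ c : ℂ, c • v = x *ᵥ y := by
    unfold Matrix.rank at hrank
    obtain ⟨v, hv⟩ := finrank_le_one_iff.mp hrank.le
    refine ⟨v, fun y => ?_⟩
    obtain ⟨c, hc⟩ := hv ⟨x *ᵥ y, y, rfl⟩
    exact ⟨c, congrArg Subtype.val hc⟩
  choose b hb using fun j => hv (Pi.single j 1)
  have hx : x = Matrix.vecMulVec v b := by
    ext i j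
    have := congrFun (hb j) i
    simp at this
    rw [← this, Matrix.vecMulVec_apply, mul_comm]
  rw [hx]
  ext i j
  simp only [Matrix.mul_apply, Matrix.smul_apply, Matrix.trace, Matrix.diag,
    Matrix.vecMulVec_apply, smul_eq_mul, Finset.sum_mul]
  refine Finset.sum_congr rfl fun k _ => Finset.sum_congr rfl fun l _ => ?_
  ring

lemma aux_complete {n : ℕ} (hn : (n : ℂ) ≠ 0) {E : Fin (n ^ 2) → Matrix (Fin n) (Fin n) ℂ}
    (hEherm : ∀ α, (E α).IsHermitian)
    (hEspan : ∀ u : Matrix (Fin n) (Fin n) ℂ, u.IsHermitian →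
      u = ∑ α, (jInner (E α) u : ℂ) • E α) (u : Matrix (Fin n) (Fin n) ℂ) :
    ∑ α, (E α * u).trace • E α = (n : ℂ) • u := by
  have key : ∀ u : Matrix (Fin n) (Fin n) ℂ, u.IsHermitian →
      ∑ α, (E α * u).trace • E α = (n : ℂ) • u := by
    intro u hu
    conv_rhs => rw [hEspan u hu]
    rw [Finset.smul_sum]
    refine Finset.sum_congr rfl fun α _ => ?_
    unfold jInner
    rw [smul_smul]
    push_cast
    rw [aux_re_trace (hEherm α) hu]
    congr 1
    field_simp
  have h1 := key (u + uᴴ) (Matrix.isHermitian_add_transpose_self u)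
  have h2 := key (Complex.I • (u - uᴴ)) (by
    unfold Matrix.IsHermitian
    simp
    module)
  simp only [mul_add, mul_sub, Matrix.mul_smul, Matrix.trace_add, Matrix.trace_sub,
    Matrix.trace_smul, add_smul, sub_smul, smul_eq_mul, mul_smul, ← Finset.smul_sum,
    Finset.sum_add_distrib, Finset.sum_sub_distrib] at h1 h2
  rw [smul_comm (n : ℂ) Complex.I, ← smul_sub] at h2
  have h3 := smul_right_injective _ Complex.I_ne_zero h2
  simp only [smul_sub, smul_add] at h1 h3
  have h4 := congrArg₂ (· + ·) h1 h3
  have h5 : (2 : ℂ) • ∑ α, (E α * u).trace • E α = (2 : ℂ) • ((n : ℂ) • u) := by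
    rw [two_smul, two_smul]
    convert h4 using 1 <;> abel
  exact smul_right_injective _ (two_ne_zero) h5

lemma aux_parseval {n : ℕ} {E : Fin (n ^ 2) → Matrix (Fin n) (Fin n) ℂ}
    (hE : ∀ u, ∑ α, (E α * u).trace • E α = (n : ℂ) • u) (u : Matrix (Fin n) (Fin n) ℂ) :
    ∑ α, (E α * u).trace ^ 2 = n * (u * u).trace := by
  have h := congrArg (fun M => (M * u).trace) (hE u)
  simp only [Matrix.sum_mul, Matrix.trace_sum, Matrix.smul_mul, Matrix.trace_smul, smul_eq_mul] at h
  rw [← h]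
  exact Finset.sum_congr rfl fun α _ => by ring

lemma aux_sandwich {n : ℕ} {E : Fin (n ^ 2) → Matrix (Fin n) (Fin n) ℂ}
    (hE : ∀ u, ∑ α, (E α * u).trace • E α = (n : ℂ) • u) (a : Matrix (Fin n) (Fin n) ℂ) :
    ∑ α, E α * a * E α = ((n : ℂ) * a.trace) • (1 : Matrix (Fin n) (Fin n) ℂ) := by
  have h : ∀ i j k l, ∑ α, E α i j * E α k l = if i = l ∧ j = k then (n : ℂ) else 0 := by
    intro i j k l
    have := congrFun (congrFun (hE (Matrix.single j i 1)) k) l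
    simp only [Matrix.sum_apply, Matrix.smul_apply, Matrix.trace_mul_single, smul_eq_mul,
      Matrix.single_apply] at this
    simp at this
    rw [this]
    congr 1
    simp [and_comm]
  ext i l
  simp only [Matrix.sum_apply, Matrix.mul_apply, Finset.sum_mul]
  rw [Finset.sum_comm]
  have : ∀ k, ∑ α, ∑ j, E α i j * a j k * E α k l = if i = l then n * a k k else 0 := by
    intro k
    rw [Finset.sum_comm]
    have : ∀ j, ∑ α, E α i j * a j k * E α k l = a j k * (if i = l ∧ j = k then (n : ℂ) else 0) := by
      intro j
      rw [← h, Finset.mul_sum]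
      exact Finset.sum_congr rfl fun α _ => by ring
    simp only [this]
    by_cases hil : i = l <;> simp [hil, mul_comm]
  simp only [this]
  by_cases hil : i = l <;> simp [hil, Matrix.trace, Finset.mul_sum]

lemma aux_L2 {n : ℕ} {E : Fin (n ^ 2) → Matrix (Fin n) (Fin n) ℂ}
    (hE : ∀ u, ∑ α, (E α * u).trace • E α = (n : ℂ) • u) (C : Matrix (Fin n) (Fin n) ℂ) :
    ∑ β, ∑ α, (E α * (E β * C - C * E β)).trace ^ 2
      = 2 * (n : ℂ) ^ 2 * C.trace ^ 2 - 2 * (n : ℂ) ^ 3 * (C * C).trace := by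
  have h1 : ∑ β, (E β * C * E β * C).trace = (n : ℂ) * C.trace ^ 2 := by
    rw [← Matrix.trace_sum, ← Matrix.sum_mul, aux_sandwich hE]
    simp
    ring
  have h2 : ∑ β, (E β * 1 * E β * (C * C)).trace = (n : ℂ) ^ 2 * (C * C).trace := by
    rw [← Matrix.trace_sum, ← Matrix.sum_mul, aux_sandwich hE]
    rw [Matrix.smul_mul, Matrix.trace_smul, one_mul, Matrix.trace_one, Fintype.card_fin, smul_eq_mul]
    ring
  have h3 : ∀ β, ∑ α, (E α * (E β * C - C * E β)).trace ^ 2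
      = 2 * n * (E β * C * E β * C).trace - 2 * n * (E β * 1 * E β * (C * C)).trace := by
    intro β
    rw [aux_parseval hE]
    simp only [mul_sub, sub_mul, Matrix.trace_sub, mul_one]
    have e1 : (C * E β * (C * E β)).trace = (E β * C * E β * C).trace := by
      rw [mul_assoc, Matrix.trace_mul_comm]; simp only [mul_assoc]
    have e2 : (C * E β * (E β * C)).trace = (E β * E β * (C * C)).trace := by
      rw [mul_assoc, Matrix.trace_mul_comm]; simp only [mul_assoc]
    have e3 : (E β * C * (C * E β)).trace = (E β * E β * (C * C)).trace := by
      rw [← mul_assoc, Matrix.trace_mul_comm]; simp only [mul_assoc]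
    rw [e1, e2, e3, ← mul_assoc (E β * C)]
    ring
  simp only [h3, Finset.sum_sub_distrib, ← Finset.mul_sum, h1, h2]
  ring

lemma aux_LL {n : ℕ} (μ : ℝ) {x p u v : Matrix (Fin n) (Fin n) ℂ}
    (hx : x.IsHermitian) (hp : p.IsHermitian) (hu : u.IsHermitian) (hv : v.IsHermitian)
    (ht : ((x.trace.re : ℝ) : ℂ) = x.trace) (C : Matrix (Fin n) (Fin n) ℂ)
    (hC : C = (1 / (4 * n) : ℂ) • (x * p - p * x) + (-(μ * Complex.I / (2 * x.trace))) • x) :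
    ((LLfun μ x p u v : ℝ) : ℂ) = (u * (v * C - C * v)).trace := by
  unfold LLfun jInner
  push_cast
  rw [aux_re_trace ((aux_jordan_herm hu (aux_jordan_herm hv hx)).sub
    (aux_jordan_herm hv (aux_jordan_herm hu hx))) hp, aux_I_trace hx hu hv, ht, aux_jordan_diff, hC]
  simp only [Matrix.mul_smul, Matrix.smul_mul, mul_add, add_mul, mul_sub, sub_mul, mul_assoc,
    Matrix.trace_add, Matrix.trace_sub, Matrix.trace_smul, smul_eq_mul]
  have e1 : (x * (u * (v * p))).trace = (u * (v * (p * x))).trace := by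
    rw [Matrix.trace_mul_comm]; simp only [mul_assoc]
  have e2 : (x * (v * (u * p))).trace = (u * (p * (x * v))).trace := by
    rw [← mul_assoc, Matrix.trace_mul_comm]; simp only [mul_assoc]
  have e3 : (v * (u * (x * p))).trace = (u * (x * (p * v))).trace := by
    rw [Matrix.trace_mul_comm]; simp only [mul_assoc]
  have e4 : (x * (u * v)).trace = (u * (v * x)).trace := by
    rw [Matrix.trace_mul_comm]; simp only [mul_assoc]
  have e5 : (x * (v * u)).trace = (u * (x * v)).trace := by
    rw [← mul_assoc, Matrix.trace_mul_comm]
  rw [e1, e2, e3, e4, e5]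
  ring

lemma aux_X {n : ℕ} (hn : (n : ℂ) ≠ 0) (μ : ℝ) {x p u : Matrix (Fin n) (Fin n) ℂ}
    (hx : x.IsHermitian) (hp : p.IsHermitian) (hu : u.IsHermitian)
    (ht : ((x.trace.re : ℝ) : ℂ) = x.trace) (c : ℂ) (hc : c = n * μ * Complex.I / x.trace) :
    ((Xfun μ x p u : ℝ) : ℂ) = (1 / n : ℂ) * (u * ((p + c • 1) * x * (p - c • 1))).trace := by
  have hpup : (p * u * p).IsHermitian := by
    unfold Matrix.IsHermitian
    simp only [Matrix.conjTranspose_mul, hp.eq, hu.eq, mul_assoc]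
  unfold Xfun jInner
  rw [aux_triple]
  push_cast
  rw [aux_re_trace hx hpup, aux_re_trace hx hu, aux_I_trace hx hu hp, ht]
  simp only [Matrix.mul_smul, Matrix.smul_mul, mul_add, add_mul, mul_sub, sub_mul, mul_assoc,
    Matrix.trace_add, Matrix.trace_sub, Matrix.trace_smul, smul_eq_mul, mul_one, one_mul]
  have e1 : (x * (p * (u * p))).trace = (u * (p * (x * p))).trace := by
    rw [← mul_assoc, Matrix.trace_mul_comm]; simp only [mul_assoc]
  have e2 : (x * u).trace = (u * x).trace := Matrix.trace_mul_comm _ _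
  have e3 : (x * (u * p)).trace = (u * (p * x)).trace := by
    rw [Matrix.trace_mul_comm]; simp only [mul_assoc]
  have e4 : (x * (p * u)).trace = (u * (x * p)).trace := by
    rw [← mul_assoc, Matrix.trace_mul_comm]
  rw [e1, e2, e3, e4]
  have hc2 : c * c = - (n ^ 2 * μ ^ 2 / x.trace ^ 2) := by
    rw [hc]
    ring_nf
    rw [Complex.I_sq]
    ring
  have hc3 : (1 / n : ℂ) * c = μ * Complex.I / x.trace := by
    rw [hc]
    field_simp
  have hc4 : (1 / n : ℂ) * (c * c) = - (n * μ ^ 2 / x.trace ^ 2) := by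
    rw [hc2]
    field_simp
  linear_combination (-((u * (x * p)).trace - (u * (p * x)).trace)) * hc3
    + (u * x).trace * hc4

theorem hamiltonian_angular_momentum_LRL_relation
    (n : ℕ) (hn : 2 ≤ n) (μ : ℝ)
    (x : Matrix (Fin n) (Fin n) ℂ)
    (hherm : x.IsHermitian) (hpsd : x.PosSemidef) (hrank : x.rank = 1)
    (p w : Matrix (Fin n) (Fin n) ℂ) (hw : w.IsHermitian) (hp : p = jordanProd x w)
    (E : Fin (n ^ 2) → Matrix (Fin n) (Fin n) ℂ)
    (hEherm : ∀ α, (E α).IsHermitian)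
    (hEorth : ∀ α β, jInner (E α) (E β) = if α = β then 1 else 0)
    (hEspan : ∀ u : Matrix (Fin n) (Fin n) ℂ, u.IsHermitian →
      u = ∑ α, (jInner (E α) u : ℂ) • E α)
    :
    -2 * Hfun μ x p
        * ((1 / 2 : ℝ) * (∑ α, ∑ β, (LLfun μ x p (E α) (E β)) ^ 2)
            - ((n : ℝ) ^ 2 * ((n : ℝ) - 1) / 4) * μ ^ 2)
      = ((n : ℝ) / 2) ^ 2
          * ((n : ℝ) - 1 - (-1 + ∑ α, (Afun μ x p (E α)) ^ 2)) := by
  have hn0 : (n : ℂ) ≠ 0 := by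
    have : n ≠ 0 := by omega
    exact_mod_cast this
  have hE := aux_complete hn0 hEherm hEspan
  have hpH : p.IsHermitian := hp ▸ aux_jordan_herm hherm hw
  have ht : ((x.trace.re : ℝ) : ℂ) = x.trace := by
    have := aux_re_trace hherm (Matrix.isHermitian_one (α := ℂ) (n := Fin n))
    rwa [mul_one] at this
  have ht0 : x.trace ≠ 0 := by
    intro h
    rw [hpsd.trace_eq_zero_iff] at h
    rw [h, Matrix.rank_zero] at hrank
    exact zero_ne_one hrank
  have hr := aux_rank_one hrank
  have hxx : x * x = x.trace • x := by simpa using hr 1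
  have hxpx : x * (p * x) = (x * p).trace • x := by rw [← mul_assoc]; exact hr p
  obtain ⟨c, hc⟩ : ∃ c : ℂ, c = n * μ * Complex.I / x.trace := ⟨_, rfl⟩
  obtain ⟨C, hC⟩ : ∃ C : Matrix (Fin n) (Fin n) ℂ, C = (1 / (4 * n) : ℂ) • (x * p - p * x)
    + (-(μ * Complex.I / (2 * x.trace))) • x := ⟨_, rfl⟩
  obtain ⟨B, hB⟩ : ∃ B : Matrix (Fin n) (Fin n) ℂ,
    B = (p + c • 1) * x * (p - c • 1) := ⟨_, rfl⟩
  have hLsum : ((∑ α, ∑ β, (LLfun μ x p (E α) (E β)) ^ 2 : ℝ) : ℂ)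
      = 2 * (n : ℂ) ^ 2 * C.trace ^ 2 - 2 * (n : ℂ) ^ 3 * (C * C).trace := by
    rw [← aux_L2 hE C, Finset.sum_comm]
    push_cast
    refine Finset.sum_congr rfl fun β _ => Finset.sum_congr rfl fun α _ => ?_
    rw [aux_LL μ hherm hpH (hEherm α) (hEherm β) ht C hC]
  have hX : ∀ u : Matrix (Fin n) (Fin n) ℂ, u.IsHermitian →
      ((Xfun μ x p u : ℝ) : ℂ) = (1 / n : ℂ) * (u * B).trace := by
    intro u hu
    rw [aux_X hn0 μ hherm hpH hu ht c hc, hB]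
  have hY : ∀ u : Matrix (Fin n) (Fin n) ℂ, u.IsHermitian →
      ((Yfun x u : ℝ) : ℂ) = (1 / n : ℂ) * (u * x).trace := by
    intro u hu
    unfold Yfun jInner
    push_cast
    rw [aux_re_trace hu hherm]
  have hX1 := hX 1 Matrix.isHermitian_one
  have hY1 := hY 1 Matrix.isHermitian_one
  rw [one_mul] at hX1 hY1
  obtain ⟨h, hh⟩ : ∃ h : ℂ, h = B.trace / (2 * x.trace) - n / x.trace := ⟨_, rfl⟩
  have hH : ((Hfun μ x p : ℝ) : ℂ) = h := by
    unfold Hfun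
    push_cast
    rw [hX1, hY1, hh]
    field_simp
  have hA : ∀ α, ((Afun μ x p (E α) : ℝ) : ℂ)
      = (1 / n : ℂ) * (E α * ((1 / 2 : ℂ) • B - h • x)).trace := by
    intro α
    unfold Afun
    push_cast
    rw [hX1, hY1, hX _ (hEherm α), hY _ (hEherm α), hh]
    simp only [mul_sub, Matrix.mul_smul, Matrix.trace_sub, Matrix.trace_smul, smul_eq_mul]
    field_simp
    ring
  have hAsum : ((∑ α, (Afun μ x p (E α)) ^ 2 : ℝ) : ℂ)
      = (1 / n : ℂ) * (((1 / 2 : ℂ) • B - h • x) * ((1 / 2 : ℂ) • B - h • x)).trace := by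
    push_cast
    simp only [hA, mul_pow, ← Finset.mul_sum]
    rw [aux_parseval hE]
    field_simp
  -- traces
  obtain ⟨t, htd⟩ : ∃ t, t = x.trace := ⟨_, rfl⟩
  obtain ⟨s, hs⟩ : ∃ s, s = (x * p).trace := ⟨_, rfl⟩
  obtain ⟨m, hm⟩ : ∃ m, m = (x * (p * p)).trace := ⟨_, rfl⟩
  have hc2 : c * c = - (n ^ 2 * μ ^ 2 / t ^ 2) := by
    rw [hc, htd]
    ring_nf
    rw [Complex.I_sq]
    ring
  have hps : (p * x).trace = s := by rw [hs, Matrix.trace_mul_comm]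
  have tr1 : (p * (x * p)).trace = m := by
    rw [hm, Matrix.trace_mul_comm, mul_assoc]
  have hBt : B.trace = m - c * c * t := by
    rw [hB]
    simp only [Matrix.mul_smul, Matrix.smul_mul, mul_add, add_mul, mul_sub, sub_mul, mul_assoc,
      Matrix.trace_add, Matrix.trace_sub, Matrix.trace_smul, smul_eq_mul, mul_one, one_mul]
    rw [tr1, ← hs, hps, ← htd]
    ring
  have hBx : (B * x).trace = s ^ 2 - c * c * t ^ 2 := by
    rw [hB]
    simp only [Matrix.mul_smul, Matrix.smul_mul, mul_add, add_mul, mul_sub, sub_mul, mul_assoc,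
      Matrix.trace_add, Matrix.trace_sub, Matrix.trace_smul, smul_eq_mul, mul_one, one_mul,
      hxpx, hxx]
    rw [← hs, hps, ← htd]
    ring
  have hBB : (B * B).trace = B.trace ^ 2 := by
    have : B * B = B.trace • B := by
      have h1 := hr ((p - c • 1) * (p + c • 1))
      have h2 : (x * ((p - c • 1) * (p + c • 1))).trace = B.trace := by
        rw [hB, ← mul_assoc, Matrix.trace_mul_comm, ← mul_assoc]
      rw [h2] at h1
      calc B * B = (p + c • 1) * (x * ((p - c • 1) * (p + c • 1)) * x) * (p - c • 1) := by
            rw [hB]; simp only [mul_assoc]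
        _ = B.trace • B := by
            rw [h1, Matrix.mul_smul, Matrix.smul_mul, ← hB]
    rw [this, Matrix.trace_smul, smul_eq_mul, sq]
  have hDD : (((1 / 2 : ℂ) • B - h • x) * ((1 / 2 : ℂ) • B - h • x)).trace
      = B.trace ^ 2 / 4 - h * (B * x).trace + h ^ 2 * t ^ 2 := by
    simp only [Matrix.mul_smul, Matrix.smul_mul, mul_sub, sub_mul,
      Matrix.trace_sub, Matrix.trace_smul, smul_eq_mul, hBB, hxx]
    rw [Matrix.trace_mul_comm x B, ← htd]
    ring
  have hCt : C.trace = -(μ * Complex.I / 2) := by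
    rw [hC]
    simp only [Matrix.trace_add, Matrix.trace_sub, Matrix.trace_smul, smul_eq_mul]
    rw [← hs, hps]
    field_simp
    ring
  have hCC : (C * C).trace = (1 / (4 * n)) ^ 2 * (2 * s ^ 2 - 2 * t * m) - μ ^ 2 / 4 := by
    have q1 : x * (p * (x * p)) = s • (x * p) := by
      rw [← mul_assoc p, ← mul_assoc x, hxpx, Matrix.smul_mul, hs]
    have q2 : (x * (p * (p * x))).trace = t * m := by
      rw [Matrix.trace_mul_comm, mul_assoc, mul_assoc, hxx]
      simp only [Matrix.mul_smul, Matrix.trace_smul, smul_eq_mul]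
      rw [Matrix.trace_mul_comm, mul_assoc, tr1, htd]
    have q3 : x * (x * p) = t • (x * p) := by rw [← mul_assoc, hxx, Matrix.smul_mul, htd]
    rw [hC]
    simp only [Matrix.mul_smul, Matrix.smul_mul, mul_add, add_mul, mul_sub, sub_mul, mul_assoc,
      Matrix.trace_add, Matrix.trace_sub, Matrix.trace_smul, smul_eq_mul, q1, q2, q3, hxpx, hxx, tr1]
    rw [← hs, hps, ← htd]
    rw [← htd] at ht0
    field_simp
    ring_nf
    rw [Complex.I_sq]
    ring
  have hht : h * t = B.trace / 2 - n := by
    rw [hh, htd]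
    field_simp
  rw [← htd] at ht0
  apply Complex.ofReal_injective
  rw [Complex.ofReal_mul, Complex.ofReal_mul, Complex.ofReal_mul, Complex.ofReal_sub,
    Complex.ofReal_mul, Complex.ofReal_sub, Complex.ofReal_add, hLsum, hAsum, hH, hDD, hCC, hCt, hBx]
  push_cast
  have hm2 : B.trace = m - c * c * t := hBt
  have hBt' : m = B.trace + c * c * t := by rw [hm2]; ring
  rw [hBt']
  have hI := Complex.I_sq
  generalize B.trace = b at *
  have hb : b = 2 * (h * t + n) := by rw [hht]; ring
  rw [hb]
  field_simp
  ring_nf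
  rw [hI]
  ring
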